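/- Let S be a finite set of n ≥ 2 points in the plane in convex position, and let uv be an edge of the convex hull of S. Then there exist two compatible trees T_A, T_B ∈ 𝒯(S), namely a spanning path consisting of edges of the convex hull of S and a spanning star centered at u or at v, such that both contain the edge uv and they share no other edge. -/

import Mathlib

open scoped Classical

noncomputable section

/-- Points in the plane. -/
abbrev Pt : Type := ℝ × ℝ

/-- The closed straight-line segment spanned by an (unordered) edge. -/
def segOf (e : Sym2 Pt) : Set Pt :=
  Sym2.lift ⟨fun p q => segment ℝ p q, fun p q => segment_symm ℝ p q⟩ e

/-- The set of endpoints of an edge. -/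
def epts (e : Sym2 Pt) : Set Pt := {p | p ∈ e}

/-- Two edges intersect in at most common endpoints (they do not cross). -/
def NoCrossPair (e f : Sym2 Pt) : Prop := segOf e ∩ segOf f ⊆ epts e ∩ epts f

/-- A set of edges is noncrossing: any two distinct edges meet in at most a common endpoint. -/
def NoCross (E : Finset (Sym2 Pt)) : Prop := ∀ e ∈ E, ∀ f ∈ E, e ≠ f → NoCrossPair e f

/-- `E` is the edge set of a noncrossing straight-line spanning tree on the point set `S`:
all edges are nondegenerate with endpoints in `S`, pairwise noncrossing, there are
`|S| - 1` of them, and they connect all of `S`. -/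
def IsPST (S : Finset Pt) (E : Finset (Sym2 Pt)) : Prop :=
  (∀ e ∈ E, ¬ e.IsDiag ∧ ∀ p ∈ e, p ∈ S) ∧
  NoCross E ∧ E.card + 1 = S.card ∧
  ∀ p ∈ S, ∀ q ∈ S, Relation.ReflTransGen (fun a b => s(a, b) ∈ E) p q

/-- `S` is in general position: no three of its points are collinear. -/
def GenPos (S : Finset Pt) : Prop :=
  ∀ p ∈ S, ∀ q ∈ S, ∀ r ∈ S, p ≠ q → p ≠ r → q ≠ r → ¬ Collinear ℝ ({p, q, r} : Set Pt)

/-- `S` is in convex position: every point of `S` is a vertex of the convex hull of `S`. -/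
def ConvexPos (S : Finset Pt) : Prop :=
  ∀ p ∈ S, p ∉ convexHull ℝ ((S : Set Pt) \ {p})

/-- The open interior of the triangle with vertices `p`, `q`, `r`. -/
def triInt (p q r : Pt) : Set Pt := interior (convexHull ℝ ({p, q, r} : Set Pt))

/-- `y` can be reached from `x` by a sequence of at most `m` `step`-operations. -/
def ReachesIn {α : Type*} (step : α → α → Prop) (m : ℕ) (x y : α) : Prop :=
  ∃ k ≤ m, ∃ f : ℕ → α, f 0 = x ∧ f k = y ∧ ∀ i < k, step (f i) (f (i + 1))

/-- A simultaneous rotation from `E₁` to `E₂`: a bijection `π` between the removed and the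
inserted edges such that each `e` shares an endpoint with `π e` and `π e` crosses no edge
of `E₁`. -/
def SimRotation (S : Finset Pt) (E₁ E₂ : Finset (Sym2 Pt)) : Prop :=
  IsPST S E₁ ∧ IsPST S E₂ ∧ ∃ π : Sym2 Pt → Sym2 Pt,
    Set.BijOn π ↑(E₁ \ E₂) ↑(E₂ \ E₁) ∧
    ∀ e ∈ E₁ \ E₂, (∃ p, p ∈ e ∧ p ∈ π e) ∧ ∀ f ∈ E₁, NoCrossPair (π e) f

/-- An empty-triangle rotation replaces an edge `pq` by an adjacent edge `pr` such that
no edge of either tree meets the interior of the triangle `pqr`. -/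
def EmptyTriRot (S : Finset Pt) (E₁ E₂ : Finset (Sym2 Pt)) : Prop :=
  IsPST S E₁ ∧ IsPST S E₂ ∧ ∃ p q r : Pt,
    E₁ \ E₂ = {s(p, q)} ∧ E₂ \ E₁ = {s(p, r)} ∧
    ∀ g ∈ E₁ ∪ E₂, Disjoint (segOf g) (triInt p q r)

/-- A simultaneous empty-triangle rotation. -/
def SimEmptyTriRot (S : Finset Pt) (E₁ E₂ : Finset (Sym2 Pt)) : Prop :=
  IsPST S E₁ ∧ IsPST S E₂ ∧ ∃ π : Sym2 Pt → Sym2 Pt,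
    Set.BijOn π ↑(E₁ \ E₂) ↑(E₂ \ E₁) ∧
    ∀ e ∈ E₁ \ E₂, ∃ p q r : Pt, e = s(p, q) ∧ π e = s(p, r) ∧
      ∀ g ∈ E₁ ∪ E₂, Disjoint (segOf g) (triInt p q r)

/-- An edge slide replaces `pq` by `pr`, where `qr` is an edge of both trees and no edge of
either tree meets the interior of the triangle `pqr`. -/
def EdgeSlide (S : Finset Pt) (E₁ E₂ : Finset (Sym2 Pt)) : Prop :=
  IsPST S E₁ ∧ IsPST S E₂ ∧ ∃ p q r : Pt,
    E₁ \ E₂ = {s(p, q)} ∧ E₂ \ E₁ = {s(p, r)} ∧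
    s(q, r) ∈ E₁ ∧ s(q, r) ∈ E₂ ∧
    ∀ g ∈ E₁ ∪ E₂, Disjoint (segOf g) (triInt p q r)

/-- A simultaneous edge slide. -/
def SimEdgeSlide (S : Finset Pt) (E₁ E₂ : Finset (Sym2 Pt)) : Prop :=
  IsPST S E₁ ∧ IsPST S E₂ ∧ ∃ π : Sym2 Pt → Sym2 Pt,
    Set.BijOn π ↑(E₁ \ E₂) ↑(E₂ \ E₁) ∧
    ∀ e ∈ E₁ \ E₂, ∃ p q r : Pt, e = s(p, q) ∧ π e = s(p, r) ∧
      s(q, r) ∈ E₁ ∧ s(q, r) ∈ E₂ ∧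
      ∀ g ∈ E₁ ∪ E₂, Disjoint (segOf g) (triInt p q r)

/-- `e` is an edge of the convex hull of `S`: it joins two distinct points of `S` and its
segment lies on the boundary of the convex hull of `S`. -/
def IsHullEdge (S : Finset Pt) (e : Sym2 Pt) : Prop :=
  ∃ u v : Pt, e = s(u, v) ∧ u ∈ S ∧ v ∈ S ∧ u ≠ v ∧
    segment ℝ u v ⊆ frontier (convexHull ℝ (S : Set Pt))

/-- The spanning star centered at `v`. -/
def starAt (S : Finset Pt) (v : Pt) : Finset (Sym2 Pt) := (S.erase v).image (fun w => s(v, w))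

/-- An edge-labeled tree: an edge set together with a labeling function. -/
abbrev LTree := Finset (Sym2 Pt) × (Sym2 Pt → ℕ)

/-- `T` is an edge-labeled noncrossing straight-line spanning tree on `S`: its edge set is in
`𝒯(S)` and its labeling is a bijection from the edges onto `{1, …, |S| - 1}`
(normalized to `0` on non-edges). -/
def IsLabeledPST (S : Finset Pt) (T : LTree) : Prop :=
  IsPST S T.1 ∧ Set.BijOn T.2 ↑T.1 (Set.Icc 1 (S.card - 1)) ∧ ∀ e, e ∉ T.1 → T.2 e = 0

/-- A simultaneous exchange on edge-labeled trees: an arbitrary bijection between removed and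
inserted edges transferring labels, all common edges keeping their labels. -/
def LabSimExchange (S : Finset Pt) (T₁ T₂ : LTree) : Prop :=
  IsLabeledPST S T₁ ∧ IsLabeledPST S T₂ ∧ ∃ π : Sym2 Pt → Sym2 Pt,
    Set.BijOn π ↑(T₁.1 \ T₂.1) ↑(T₂.1 \ T₁.1) ∧
    (∀ e ∈ T₁.1 \ T₂.1, T₂.2 (π e) = T₁.2 e) ∧
    ∀ e ∈ T₁.1 ∩ T₂.1, T₂.2 e = T₁.2 e

/-- A rotation on edge-labeled trees: the removed and inserted edges share an endpoint and do
not cross, the label of the removed edge is transferred, and all other labels are kept. -/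
def LabRotation (S : Finset Pt) (T₁ T₂ : LTree) : Prop :=
  IsLabeledPST S T₁ ∧ IsLabeledPST S T₂ ∧ ∃ e₁ e₂ : Sym2 Pt,
    T₁.1 \ T₂.1 = {e₁} ∧ T₂.1 \ T₁.1 = {e₂} ∧
    (∃ p, p ∈ e₁ ∧ p ∈ e₂) ∧ NoCrossPair e₁ e₂ ∧
    T₂.2 e₂ = T₁.2 e₁ ∧ ∀ e ∈ T₁.1 ∩ T₂.1, T₂.2 e = T₁.2 e

/-- An edge slide on edge-labeled trees, transferring the label of the slid edge. -/
def LabEdgeSlide (S : Finset Pt) (T₁ T₂ : LTree) : Prop :=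
  IsLabeledPST S T₁ ∧ IsLabeledPST S T₂ ∧ ∃ p q r : Pt,
    T₁.1 \ T₂.1 = {s(p, q)} ∧ T₂.1 \ T₁.1 = {s(p, r)} ∧
    s(q, r) ∈ T₁.1 ∧ s(q, r) ∈ T₂.1 ∧
    (∀ g ∈ T₁.1 ∪ T₂.1, Disjoint (segOf g) (triInt p q r)) ∧
    T₂.2 (s(p, r)) = T₁.2 (s(p, q)) ∧ ∀ e ∈ T₁.1 ∩ T₂.1, T₂.2 e = T₁.2 e

/-!
Orient the hull edge so that all other points of `S` lie to its left, say as `u → v`, and sort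
`S \ {u}` by angle around `u`, starting from `v`. By convex position this lists the vertices of a
convex polygon counterclockwise, starting with `u, v`. Its sides, without the one that closes it
up, form the path `T_A`, and `T_B` is the star at `u`. All points of `S` lie on one side of a hull
edge, and in general position this prevents it from crossing any segment between points of `S`;
star edges meet only at `u`. Finally, `u` is the first vertex of the path, so `uv` is the only path
edge at `u`.
-/

/-- Twice the signed area of the triangle `abc`: positive if `c` lies to the left of the directed
line from `a` to `b`, negative if it lies to the right. -/
def orient (a b c : Pt) : ℝ := (b.1 - a.1) * (c.2 - a.2) - (b.2 - a.2) * (c.1 - a.1)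

section Orientation

variable {a b c u v x y z : Pt}

lemma orient_rotate (a b c : Pt) : orient b c a = orient a b c := by simp only [orient]; ring

lemma orient_swap_left (a b c : Pt) : orient b a c = -orient a b c := by simp only [orient]; ring

lemma orient_swap_right (a b c : Pt) : orient a c b = -orient a b c := by simp only [orient]; ring

@[simp] lemma orient_self_left (a b : Pt) : orient a a b = 0 := by simp [orient]

@[simp] lemma orient_self_outer (a b : Pt) : orient a b a = 0 := by simp [orient]

@[simp] lemma orient_self_right (a b : Pt) : orient a b b = 0 := by simp only [orient]; ring

lemma orient_combo {s t : ℝ} (h : s + t = 1) (a b x y : Pt) :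
    orient a b (s • x + t • y) = s * orient a b x + t * orient a b y := by
  obtain rfl : s = 1 - t := by linarith
  simp only [orient, Prod.fst_add, Prod.snd_add, Prod.smul_fst, Prod.smul_snd, smul_eq_mul]
  ring

lemma continuous_orient (a b : Pt) : Continuous (orient a b) := by unfold orient; fun_prop

lemma orient_eq_zero_of_mem_segment (hx : x ∈ segment ℝ a b) : orient a b x = 0 := by
  obtain ⟨s, t, -, -, hst, rfl⟩ := hx
  simp [orient_combo hst]

lemma convex_setOf_orient_nonneg (a b : Pt) : Convex ℝ {x | 0 ≤ orient a b x} := by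
  intro x hx y hy s t hs ht hst
  rw [Set.mem_ofPred_eq] at hx hy ⊢
  rw [orient_combo hst]
  positivity

lemma interior_setOf_orient_nonneg (hab : a ≠ b) :
    interior {x | 0 ≤ orient a b x} = {x | 0 < orient a b x} := by
  let f : Pt →L[ℝ] ℝ := (b.1 - a.1) • .snd ℝ ℝ ℝ - (b.2 - a.2) • .fst ℝ ℝ ℝ
  have f_apply (x : Pt) : f x = (b.1 - a.1) * x.2 - (b.2 - a.2) * x.1 := rfl
  have orient_eq : ∀ x, orient a b x = f x - f a := fun x ↦ by
    simp only [orient, f_apply]; ring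
  have f_ne_zero : (f : Pt →ₗ[ℝ] ℝ) ≠ 0 := fun hf ↦ by
    have h₁ : f (0, 1) = 0 := LinearMap.congr_fun hf _
    have h₂ : f (1, 0) = 0 := LinearMap.congr_fun hf _
    rw [f_apply] at h₁ h₂
    exact hab (Prod.ext (by linarith) (by linarith))
  have interior_eq := f.interior_preimage (LinearMap.surjective f_ne_zero) (Set.Ici (f a))
  simp only [orient_eq, sub_nonneg, sub_pos]
  rwa [interior_Ici] at interior_eq

lemma collinear_of_orient_eq_zero (h : orient a b c = 0) : Collinear ℝ {a, b, c} := by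
  rcases eq_or_ne a b with rfl | hab
  · simpa using collinear_pair ℝ a c
  have normSq_ne_zero : (b.1 - a.1) ^ 2 + (b.2 - a.2) ^ 2 ≠ 0 := fun h0 ↦
    hab (Prod.ext (by nlinarith [sq_nonneg (b.1 - a.1), sq_nonneg (b.2 - a.2)])
      (by nlinarith [sq_nonneg (b.1 - a.1), sq_nonneg (b.2 - a.2)]))
  -- The coefficient is that of the orthogonal projection of `c` to the line `ab`.
  have hc : c = AffineMap.lineMap a b (((c.1 - a.1) * (b.1 - a.1) + (c.2 - a.2) * (b.2 - a.2)) /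
      ((b.1 - a.1) ^ 2 + (b.2 - a.2) ^ 2)) := by
    simp only [orient] at h
    ext <;>
      simp only [AffineMap.lineMap_apply, vsub_eq_sub, vadd_eq_add, smul_eq_mul, Prod.fst_add,
        Prod.snd_add, Prod.smul_fst, Prod.smul_snd, Prod.fst_sub, Prod.snd_sub] <;>
      field_simp
    · linear_combination (-(b.2 - a.2)) * h
    · linear_combination (b.1 - a.1) * h
  rw [Set.pair_comm, Set.insert_comm]
  refine collinear_insert_of_mem_affineSpan_pair ?_
  rw [hc]
  exact AffineMap.lineMap_mem_affineSpan_pair _ _ _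

/-- The weights are the barycentric coordinates of `x` with respect to `abc`. -/
lemma mem_convexHull_of_orient_nonneg {s : Set Pt} (ha : a ∈ s) (hb : b ∈ s) (hc : c ∈ s)
    (habc : 0 < orient a b c) (hab : 0 ≤ orient a b x) (hbc : 0 ≤ orient b c x)
    (hca : 0 ≤ orient c a x) : x ∈ convexHull ℝ s := by
  have h0 := habc.ne'
  refine mem_convexHull_of_exists_fintype
    ![orient b c x / orient a b c, orient c a x / orient a b c, orient a b x / orient a b c]
    ![a, b, c] ?_ ?_ ?_ ?_
  · intro i
    fin_cases i <;> simp only [Fin.reduceFinMk, Matrix.cons_val] <;> positivity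
  · simp only [Fin.sum_univ_three, Matrix.cons_val]
    field_simp
    simp only [orient]
    ring
  · simp [Fin.forall_fin_succ, ha, hb, hc]
  · simp only [Fin.sum_univ_three, Matrix.cons_val]
    ext <;>
    · simp only [Prod.fst_add, Prod.snd_add, Prod.smul_fst, Prod.smul_snd, smul_eq_mul]
      field_simp
      simp only [orient]
      ring

lemma orient_pos_trans (hx : 0 ≤ orient u v x) (hy : 0 < orient u v y) (hz : 0 < orient u v z)
    (hxy : 0 < orient u x y) (hyz : 0 < orient u y z) : 0 < orient u x z := by
  have pluecker : orient u v y * orient u x z =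
      orient u v z * orient u x y + orient u v x * orient u y z := by
    simp only [orient]; ring
  exact pos_of_mul_pos_right (pluecker ▸ by positivity) hy.le

lemma openSegment_subset_interior_convexHull {s : Set Pt} (hu : u ∈ s) (hv : v ∈ s) (ha : a ∈ s)
    (hb : b ∈ s) (hua : 0 < orient u v a) (hub : orient u v b < 0) :
    openSegment ℝ u v ⊆ interior (convexHull ℝ s) := by
  -- The open quadrilateral `ubva`, with diagonal `uv`.
  let quad := ({x | 0 < orient v a x} ∩ {x | 0 < orient a u x}) ∩
    ({x | 0 < orient u b x} ∩ {x | 0 < orient b v x})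
  have isOpen_left (p q : Pt) : IsOpen {x | 0 < orient p q x} :=
    isOpen_lt continuous_const (continuous_orient p q)
  have quad_open : IsOpen quad :=
    ((isOpen_left _ _).inter (isOpen_left _ _)).inter ((isOpen_left _ _).inter (isOpen_left _ _))
  have hvub : 0 < orient v u b := by rw [orient_swap_left]; linarith
  have quad_subset : quad ⊆ convexHull ℝ s := by
    rintro x ⟨⟨hva, hau⟩, hub, hbv⟩
    rcases le_total 0 (orient u v x) with hx | hx
    · exact mem_convexHull_of_orient_nonneg hu hv ha hua hx hva.le hau.le
    · refine mem_convexHull_of_orient_nonneg hv hu hb hvub ?_ hub.le hbv.le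
      rw [orient_swap_left]; linarith
  refine Set.Subset.trans ?_ (interior_maximal quad_subset quad_open)
  rintro _ ⟨s, t, hs, ht, hst, rfl⟩
  have : 0 < orient v a u := by rwa [orient_rotate]
  have : 0 < orient a u v := by rwa [← orient_rotate]
  have : 0 < orient u b v := by rwa [orient_rotate]
  have : 0 < orient b v u := by rwa [← orient_rotate]
  simp only [quad, Set.mem_inter_iff, Set.mem_ofPred_eq, orient_combo hst, orient_self_outer,
    orient_self_right, mul_zero, zero_add, add_zero]
  refine ⟨⟨?_, ?_⟩, ?_, ?_⟩ <;> positivity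

end Orientation

section NonCrossing

variable {a b c d : Pt} {e f : Sym2 Pt}

lemma NoCrossPair.symm (h : NoCrossPair e f) : NoCrossPair f e :=
  fun _ hz ↦ (h hz.symm).symm

lemma noCrossPair_of_orient_pos (hc : 0 < orient a b c) (hd : 0 < orient a b d) :
    NoCrossPair s(a, b) s(c, d) := by
  rintro z ⟨hab, s, t, hs, ht, hst, rfl⟩
  have h0 := orient_eq_zero_of_mem_segment hab
  rw [orient_combo hst] at h0
  exact absurd h0 (convex_Ioi (0 : ℝ) hc hd hs ht hst).ne'

lemma noCrossPair_of_orient_ne_zero (h : orient a b c ≠ 0) : NoCrossPair s(a, b) s(a, c) := by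
  rintro z ⟨hab, s, t, hs, ht, hst, rfl⟩
  have h0 := orient_eq_zero_of_mem_segment hab
  rw [orient_combo hst, orient_self_outer, mul_zero, zero_add] at h0
  obtain rfl : t = 0 := (mul_eq_zero.1 h0).resolve_right h
  obtain rfl : s = 1 := by linarith
  simp [epts]

end NonCrossing

/-- The directed edge `a → b` of the convex hull of `S`, traversed counterclockwise: every other
point of `S` lies strictly to its left. -/
structure IsCcwHullEdge (S : Finset Pt) (a b : Pt) : Prop where
  left_mem : a ∈ S
  right_mem : b ∈ S
  ne : a ≠ b
  orient_pos : ∀ x ∈ S, x ≠ a → x ≠ b → 0 < orient a b x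

section Position

variable {S : Finset Pt} {a b c d u v : Pt} {A B : Finset (Sym2 Pt)} {e f : Sym2 Pt}

lemma ConvexPos.not_wbtw (hS : ConvexPos S) (ha : a ∈ S) (hb : b ∈ S) (hc : c ∈ S)
    (hab : a ≠ b) (hcb : c ≠ b) : ¬ Wbtw ℝ a b c := by
  intro h
  rw [← mem_segment_iff_wbtw, ← convexHull_pair] at h
  refine hS b hb (convexHull_mono ?_ h)
  rintro x (rfl | rfl)
  exacts [⟨ha, hab⟩, ⟨hc, hcb⟩]

lemma ConvexPos.genPos (hS : ConvexPos S) : GenPos S := by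
  intro a ha b hb c hc hab hac hbc hcol
  rcases hcol.wbtw_or_wbtw_or_wbtw with h | h | h
  · exact hS.not_wbtw ha hb hc hab hbc.symm h
  · exact hS.not_wbtw hb hc ha hbc hac h
  · exact hS.not_wbtw hc ha hb hac.symm hab.symm h

lemma GenPos.orient_ne_zero (hS : GenPos S) (ha : a ∈ S) (hb : b ∈ S) (hc : c ∈ S)
    (hab : a ≠ b) (hac : a ≠ c) (hbc : b ≠ c) : orient a b c ≠ 0 :=
  fun h ↦ hS a ha b hb c hc hab hac hbc (collinear_of_orient_eq_zero h)

/-- Otherwise `b` would lie in the triangle `uac`. -/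
lemma ConvexPos.orient_pos (hS : ConvexPos S) (hu : u ∈ S) (ha : a ∈ S) (hb : b ∈ S) (hc : c ∈ S)
    (huab : 0 < orient u a b) (hubc : 0 < orient u b c) (huac : 0 < orient u a c) :
    0 < orient a b c := by
  by_contra! habc
  have hub : u ≠ b := by rintro rfl; simp at hubc
  have hab : a ≠ b := by rintro rfl; simp at huab
  have hcb : c ≠ b := by rintro rfl; simp at hubc
  refine hS b hb (mem_convexHull_of_orient_nonneg (a := u) (b := a) (c := c) ⟨hu, hub⟩ ⟨ha, hab⟩
    ⟨hc, hcb⟩ huac huab.le ?_ ?_)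
  · rw [orient_swap_right]; linarith
  · rw [← orient_rotate]; exact hubc.le

lemma IsCcwHullEdge.orient_nonneg (h : IsCcwHullEdge S a b) (hc : c ∈ S) : 0 ≤ orient a b c := by
  by_cases hca : c = a
  · simp [hca]
  by_cases hcb : c = b
  · simp [hcb]
  exact (h.orient_pos c hc hca hcb).le

lemma IsCcwHullEdge.not_orient_pos (h : IsCcwHullEdge S a b) (hc : c ∈ S) :
    ¬ 0 < orient a c b := by
  rw [orient_swap_right, neg_pos, not_lt]
  exact h.orient_nonneg hc

lemma IsCcwHullEdge.isHullEdge (h : IsCcwHullEdge S a b) : IsHullEdge S s(a, b) := by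
  refine ⟨a, b, rfl, h.left_mem, h.right_mem, h.ne, fun z hz ↦ ⟨subset_closure ?_, fun hint ↦ ?_⟩⟩
  · exact segment_subset_convexHull h.left_mem h.right_mem hz
  have hull_subset : convexHull ℝ (S : Set Pt) ⊆ {x | 0 ≤ orient a b x} :=
    convexHull_min (fun _ ↦ h.orient_nonneg) (convex_setOf_orient_nonneg a b)
  have hpos := interior_mono hull_subset hint
  rw [interior_setOf_orient_nonneg h.ne] at hpos
  exact hpos.ne' (orient_eq_zero_of_mem_segment hz)

lemma isHullEdge_mk_iff : IsHullEdge S s(u, v) ↔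
    u ∈ S ∧ v ∈ S ∧ u ≠ v ∧ segment ℝ u v ⊆ frontier (convexHull ℝ (S : Set Pt)) := by
  refine ⟨?_, fun h ↦ ⟨u, v, rfl, h⟩⟩
  rintro ⟨p, q, heq, hp, hq, hpq, hfront⟩
  rcases Sym2.eq_iff.1 heq with ⟨rfl, rfl⟩ | ⟨rfl, rfl⟩
  exacts [⟨hp, hq, hpq, hfront⟩, ⟨hq, hp, hpq.symm, segment_symm ℝ u v ▸ hfront⟩]

lemma IsHullEdge.not_orient_pos_neg (h : IsHullEdge S s(u, v)) (ha : a ∈ S) (hb : b ∈ S) :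
    ¬ (0 < orient u v a ∧ orient u v b < 0) := by
  rintro ⟨hpos, hneg⟩
  obtain ⟨hu, hv, -, hfront⟩ := isHullEdge_mk_iff.1 h
  exact (hfront (midpoint_mem_segment u v)).2 <|
    openSegment_subset_interior_convexHull hu hv ha hb hpos hneg (midpoint_mem_openSegment u v)

lemma GenPos.isCcwHullEdge_or_swap (hS : GenPos S) (h : IsHullEdge S s(u, v)) :
    IsCcwHullEdge S u v ∨ IsCcwHullEdge S v u := by
  obtain ⟨hu, hv, huv, -⟩ := isHullEdge_mk_iff.1 h
  have hne : ∀ x ∈ S, x ≠ u → x ≠ v → orient u v x ≠ 0 := fun x hx hxu hxv ↦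
    hS.orient_ne_zero hu hv hx huv hxu.symm hxv.symm
  by_cases hneg : ∃ y ∈ S, orient u v y < 0
  · obtain ⟨y, hy, hlt⟩ := hneg
    refine .inr ⟨hv, hu, huv.symm, fun x hx hxv hxu ↦ ?_⟩
    rw [orient_swap_left, neg_pos]
    exact (hne x hx hxu hxv).lt_of_le
      (not_lt.1 fun hpos ↦ h.not_orient_pos_neg hx hy ⟨hpos, hlt⟩)
  · push Not at hneg
    exact .inl ⟨hu, hv, huv, fun x hx hxu hxv ↦ (hneg x hx).lt_of_ne' (hne x hx hxu hxv)⟩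

lemma IsCcwHullEdge.noCrossPair_left (h : IsCcwHullEdge S a b) (hc : c ∈ S) (hca : c ≠ a)
    (hcb : c ≠ b) : NoCrossPair s(a, b) s(a, c) :=
  noCrossPair_of_orient_ne_zero (h.orient_pos c hc hca hcb).ne'

lemma IsCcwHullEdge.noCrossPair_right (h : IsCcwHullEdge S a b) (hc : c ∈ S) (hca : c ≠ a)
    (hcb : c ≠ b) : NoCrossPair s(a, b) s(b, c) := by
  rw [Sym2.eq_swap (a := a)]
  refine noCrossPair_of_orient_ne_zero ?_
  rw [orient_swap_left, neg_ne_zero]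
  exact (h.orient_pos c hc hca hcb).ne'

lemma IsCcwHullEdge.noCrossPair (h : IsCcwHullEdge S a b) (hc : c ∈ S) (hd : d ∈ S)
    (hcd : c ≠ d) (hne : s(a, b) ≠ s(c, d)) : NoCrossPair s(a, b) s(c, d) := by
  by_cases hca : c = a
  · subst hca
    exact h.noCrossPair_left hd hcd.symm (by rintro rfl; exact hne rfl)
  by_cases hcb : c = b
  · subst hcb
    exact h.noCrossPair_right hd (by rintro rfl; exact hne Sym2.eq_swap) hcd.symm
  by_cases hda : d = a
  · subst hda
    rw [Sym2.eq_swap (a := c)]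
    exact h.noCrossPair_left hc hca hcb
  by_cases hdb : d = b
  · subst hdb
    rw [Sym2.eq_swap (a := c)]
    exact h.noCrossPair_right hc hca hcb
  exact noCrossPair_of_orient_pos (h.orient_pos c hc hca hcb) (h.orient_pos d hd hda hdb)

lemma IsHullEdge.noCrossPair (hS : GenPos S) (he : IsHullEdge S e) (hf : ¬ f.IsDiag)
    (hfS : ∀ p ∈ f, p ∈ S) (hne : e ≠ f) : NoCrossPair e f := by
  induction e using Sym2.ind with | _ a b
  induction f using Sym2.ind with | _ c d
  have hc := hfS c (Sym2.mem_mk_left c d)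
  have hd := hfS d (Sym2.mem_mk_right c d)
  rcases hS.isCcwHullEdge_or_swap he with h | h
  · exact h.noCrossPair hc hd hf hne
  · rw [Sym2.eq_swap (a := a)] at hne ⊢
    exact h.noCrossPair hc hd hf hne

lemma IsHullEdge.not_isDiag (he : IsHullEdge S e) : ¬ e.IsDiag := by
  obtain ⟨a, b, rfl, -, -, hab, -⟩ := he
  exact hab

lemma IsHullEdge.mem_of_mem (he : IsHullEdge S e) {p : Pt} (hp : p ∈ e) : p ∈ S := by
  obtain ⟨a, b, rfl, ha, hb, -, -⟩ := he
  rcases Sym2.mem_iff.1 hp with rfl | rfl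
  exacts [ha, hb]

lemma GenPos.noCross_of_isHullEdge (hS : GenPos S) (hA : ∀ e ∈ A, IsHullEdge S e) : NoCross A :=
  fun e he f hf hne ↦
    (hA e he).noCrossPair hS (hA f hf).not_isDiag (fun _ ↦ (hA f hf).mem_of_mem) hne

lemma IsPST.noCross_union (hB : IsPST S B) (hS : GenPos S) (hA : ∀ e ∈ A, IsHullEdge S e) :
    NoCross (A ∪ B) := by
  have cross : ∀ e ∈ A, ∀ f ∈ B, e ≠ f → NoCrossPair e f := fun e he f hf ↦
    (hA e he).noCrossPair hS (hB.1 f hf).1 (hB.1 f hf).2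
  intro e he f hf hne
  rcases Finset.mem_union.1 he with he | he <;> rcases Finset.mem_union.1 hf with hf | hf
  · exact hS.noCross_of_isHullEdge hA e he f hf hne
  · exact cross e he f hf hne
  · exact (cross f hf e he hne.symm).symm
  · exact hB.2.1 e he f hf hne

end Position

/-- The edge set of the polygonal path through `P 0, …, P n`. -/
def pathEdges {n : ℕ} (P : Fin (n + 1) → Pt) : Finset (Sym2 Pt) :=
  Finset.univ.image fun i : Fin n ↦ s(P i.castSucc, P i.succ)

section Trees

variable {S : Finset Pt} {E : Finset (Sym2 Pt)} {c : Pt} {n : ℕ}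

lemma reflTransGen_adj_of_root (h : ∀ p ∈ S, Relation.ReflTransGen (fun a b ↦ s(a, b) ∈ E) c p) :
    ∀ p ∈ S, ∀ q ∈ S, Relation.ReflTransGen (fun a b ↦ s(a, b) ∈ E) p q := by
  have adj_symm : Std.Symm fun a b ↦ s(a, b) ∈ E := ⟨fun a b hab ↦ Sym2.eq_swap (a := a) ▸ hab⟩
  exact fun p hp q hq ↦ (Std.Symm.symm _ _ (h p hp)).trans (h q hq)

lemma card_pathEdges {P : Fin (n + 1) → Pt} (hP : P.Injective) : (pathEdges P).card = n := by
  refine (Finset.card_image_of_injective _ fun i j hij ↦ ?_).trans (Finset.card_fin n)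
  rcases Sym2.eq_iff.1 hij with ⟨h, -⟩ | ⟨h, h'⟩
  · exact Fin.castSucc_injective n (hP h)
  · have h₁ := congrArg Fin.val (hP h)
    have h₂ := congrArg Fin.val (hP h')
    simp only [Fin.val_castSucc, Fin.val_succ] at h₁ h₂
    omega

lemma isPST_pathEdges {P : Fin (n + 1) → Pt} (hP : P.Injective) (hcross : NoCross (pathEdges P)) :
    IsPST (Finset.univ.image P) (pathEdges P) := by
  refine ⟨?_, hcross, ?_, reflTransGen_adj_of_root (c := P 0) ?_⟩
  · simp only [pathEdges, Finset.forall_mem_image]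
    refine fun i _ ↦ ⟨fun h ↦ (Fin.castSucc_lt_succ (i := i)).ne (hP h), fun p hp ↦ ?_⟩
    rcases Sym2.mem_iff.1 hp with rfl | rfl <;> simp
  · rw [card_pathEdges hP, Finset.card_image_of_injective _ hP, Finset.card_fin]
  · simp only [Finset.forall_mem_image, Finset.mem_univ, true_implies]
    intro i
    induction i using Fin.induction with
    | zero => exact .refl
    | succ i ih => exact ih.tail (Finset.mem_image_of_mem _ (Finset.mem_univ i))

lemma GenPos.noCross_starAt (hS : GenPos S) (hc : c ∈ S) : NoCross (starAt S c) := by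
  simp only [NoCross, starAt, Finset.forall_mem_image, Finset.mem_erase]
  rintro p ⟨hpc, hp⟩ q ⟨hqc, hq⟩ hpq
  exact noCrossPair_of_orient_ne_zero <| hS.orient_ne_zero hc hp hq hpc.symm hqc.symm
    (by rintro rfl; exact hpq rfl)

lemma GenPos.isPST_starAt (hS : GenPos S) (hc : c ∈ S) : IsPST S (starAt S c) := by
  refine ⟨?_, hS.noCross_starAt hc, ?_, reflTransGen_adj_of_root (c := c) fun p hp ↦ ?_⟩
  · simp only [starAt, Finset.forall_mem_image, Finset.mem_erase]
    rintro p ⟨hpc, hp⟩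
    refine ⟨hpc.symm, fun q hq ↦ ?_⟩
    rcases Sym2.mem_iff.1 hq with rfl | rfl
    exacts [hc, hp]
  · rw [starAt, Finset.card_image_of_injective _ fun _ _ ↦ Sym2.congr_right.1,
      Finset.card_erase_add_one hc]
  · rcases eq_or_ne p c with rfl | hpc
    · exact .refl
    · exact .single (Finset.mem_image_of_mem _ (Finset.mem_erase.2 ⟨hpc, hp⟩))

lemma pathEdges_inter_starAt {P : Fin (n + 2) → Pt} (hP : P.Injective) :
    pathEdges P ∩ starAt (Finset.univ.image P) (P 0) = {s(P 0, P 1)} := by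
  ext e
  rw [Finset.mem_inter, Finset.mem_singleton]
  constructor
  · rintro ⟨hpath, hstar⟩
    obtain ⟨i, -, rfl⟩ := Finset.mem_image.1 hpath
    obtain ⟨q, -, hq⟩ := Finset.mem_image.1 hstar
    have hmem : P 0 ∈ s(P i.castSucc, P i.succ) := hq ▸ Sym2.mem_mk_left _ _
    rcases Sym2.mem_iff.1 hmem with h | h
    · obtain rfl : i = 0 := Fin.castSucc_eq_zero_iff.1 (hP h).symm
      rfl
    · exact absurd (hP h).symm (Fin.succ_ne_zero i)
  · rintro rfl
    refine ⟨Finset.mem_image_of_mem _ (Finset.mem_univ 0), Finset.mem_image_of_mem _ ?_⟩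
    simp [hP.eq_iff]

end Trees

/-- `P` lists the vertices of a strictly convex polygon counterclockwise. Injectivity is a separate
field because with fewer than three vertices the second one is vacuous. -/
structure IsConvexPolygon {n : ℕ} (P : Fin n → Pt) : Prop where
  injective : P.Injective
  orient_pos : ∀ ⦃i j k⦄, i < j → j < k → 0 < orient (P i) (P j) (P k)

section Polygon

variable {S : Finset Pt} {u v : Pt} {n : ℕ}

lemma IsConvexPolygon.isCcwHullEdge {P : Fin (n + 1) → Pt} (hP : IsConvexPolygon P) (i : Fin n) :
    IsCcwHullEdge (Finset.univ.image P) (P i.castSucc) (P i.succ) := by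
  have hlt : i.castSucc < i.succ := Fin.castSucc_lt_succ
  refine ⟨by simp, by simp, fun h ↦ hlt.ne (hP.injective h), ?_⟩
  simp only [Finset.forall_mem_image, hP.injective.ne_iff]
  intro k _ hki hki'
  rcases lt_or_gt_of_ne hki with h | h
  · rw [orient_rotate]
    exact hP.orient_pos h hlt
  · exact hP.orient_pos hlt ((Fin.castSucc_lt_iff_succ_le.1 h).lt_of_ne' hki')

lemma IsConvexPolygon.isHullEdge_of_mem_pathEdges {P : Fin (n + 1) → Pt}
    (hP : IsConvexPolygon P) : ∀ e ∈ pathEdges P, IsHullEdge (Finset.univ.image P) e :=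
  Finset.forall_mem_image.2 fun i _ ↦ (hP.isCcwHullEdge i).isHullEdge

lemma exists_equiv_fin_of_isStrictTotalOrder {α : Type*} [Fintype α] (r : α → α → Prop)
    [IsStrictTotalOrder α r] (hn : Fintype.card α = n) :
    ∃ p : Fin n ≃ α, ∀ ⦃i j⦄, i < j → r (p i) (p j) := by
  let := linearOrderOfSTO r
  let p := Fintype.orderIsoFinOfCardEq α hn
  exact ⟨p.toEquiv, fun i j hij ↦ p.strictMono hij⟩

lemma IsCcwHullEdge.isStrictTotalOrder (h : IsCcwHullEdge S u v) (hS : GenPos S) :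
    IsStrictTotalOrder (S.erase u) fun x y ↦ 0 < orient u (x : Pt) y where
  irrefl x := by simp
  trans := by
    intro ⟨x, hx⟩ ⟨y, hy⟩ ⟨z, hz⟩ hxy hyz
    rw [Finset.mem_erase] at hx hy hz
    -- Nothing precedes `v`, so only `x` can be `v`.
    have hyv : y ≠ v := by rintro rfl; exact h.not_orient_pos hx.2 hxy
    have hzv : z ≠ v := by rintro rfl; exact h.not_orient_pos hy.2 hyz
    exact orient_pos_trans (h.orient_nonneg hx.2) (h.orient_pos y hy.2 hy.1 hyv)
      (h.orient_pos z hz.2 hz.1 hzv) hxy hyz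
  trichotomous := by
    intro ⟨x, hx⟩ ⟨y, hy⟩ hxy hyx
    rw [Finset.mem_erase] at hx hy
    rw [orient_swap_right, neg_pos, not_lt] at hyx
    by_contra hne
    exact hS.orient_ne_zero h.left_mem hx.2 hy.2 hx.1.symm hy.1.symm (by simpa using hne)
      (le_antisymm (not_lt.1 hxy) hyx)

lemma ConvexPos.isConvexPolygon_cons (hS : ConvexPos S) (hu : u ∈ S) {p : Fin n → Pt}
    (hp : ∀ i, p i ∈ S) (hpu : ∀ i, p i ≠ u) (hangle : ∀ ⦃i j⦄, i < j → 0 < orient u (p i) (p j)) :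
    IsConvexPolygon (Fin.cons u p : Fin (n + 1) → Pt) where
  injective := by
    refine Fin.cons_injective_iff.2 ⟨?_, .of_lt_imp_ne fun i j hij heq ↦ ?_⟩
    · rintro ⟨i, hi⟩
      exact hpu i hi
    · simpa [heq] using hangle hij
  orient_pos i j k hij hjk := by
    obtain ⟨j, rfl⟩ := Fin.exists_succ_eq.2 (Fin.ne_zero_of_lt hij)
    obtain ⟨k, rfl⟩ := Fin.exists_succ_eq.2 (Fin.ne_zero_of_lt hjk)
    rw [Fin.succ_lt_succ_iff] at hjk
    cases i using Fin.cases with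
    | zero => exact hangle hjk
    | succ i =>
      rw [Fin.succ_lt_succ_iff] at hij
      exact hS.orient_pos hu (hp i) (hp j) (hp k) (hangle hij) (hangle hjk)
        (hangle (hij.trans hjk))

lemma IsCcwHullEdge.exists_isConvexPolygon (h : IsCcwHullEdge S u v) (hS : ConvexPos S) :
    ∃ (n : ℕ) (P : Fin (n + 2) → Pt), IsConvexPolygon P ∧ Finset.univ.image P = S ∧
      P 0 = u ∧ P 1 = v := by
  let v' : S.erase u := ⟨v, Finset.mem_erase.2 ⟨h.ne.symm, h.right_mem⟩⟩
  obtain ⟨n, hn⟩ := Nat.exists_eq_succ_of_ne_zero (Fintype.card_pos_iff.2 ⟨v'⟩).ne'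
  have := h.isStrictTotalOrder hS.genPos
  obtain ⟨p, hp⟩ := exists_equiv_fin_of_isStrictTotalOrder
    (fun x y : S.erase u ↦ 0 < orient u (x : Pt) y) hn
  have p_mem (i) : (p i : Pt) ∈ S := Finset.mem_of_mem_erase (p i).2
  have p_zero : p 0 = v' := by
    by_contra hne
    have v_pos : 0 < p.symm v' := Fin.pos_of_ne_zero fun h0 ↦ hne (p.symm_apply_eq.1 h0).symm
    exact h.not_orient_pos (p_mem 0) (by simpa [v'] using hp v_pos)
  refine ⟨n, Fin.cons u fun i ↦ p i, hS.isConvexPolygon_cons h.left_mem p_mem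
    (fun i ↦ Finset.ne_of_mem_erase (p i).2) hp, ?_, rfl, congrArg Subtype.val p_zero⟩
  rw [← Finset.coe_inj, Finset.coe_image, Finset.coe_univ, Set.image_univ, Fin.range_cons]
  have range_p : Set.range (fun i ↦ (p i : Pt)) = S.erase u := by
    rw [← Function.comp_def, p.surjective.range_comp, Subtype.range_coe]
  rw [range_p, ← Finset.coe_insert, Finset.insert_erase h.left_mem]

lemma IsCcwHullEdge.exists_isPST_inter_starAt (h : IsCcwHullEdge S u v) (hS : ConvexPos S) :
    ∃ E, IsPST S E ∧ (∀ e ∈ E, IsHullEdge S e) ∧ E ∩ starAt S u = {s(u, v)} := by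
  obtain ⟨n, P, hP, rfl, rfl, rfl⟩ := h.exists_isConvexPolygon hS
  have hull := hP.isHullEdge_of_mem_pathEdges
  exact ⟨pathEdges P, isPST_pathEdges hP.injective (hS.genPos.noCross_of_isHullEdge hull), hull,
    pathEdges_inter_starAt hP.injective⟩

end Polygon

/-- for any hull edge `uv` of a point set in convex position there are two
compatible trees — a path of hull edges and a star centered at `u` or `v` — sharing exactly
the edge `uv`. -/
theorem stmt_14 :
    ∀ S : Finset Pt, 2 ≤ S.card → ConvexPos S → ∀ u v : Pt,
      IsHullEdge S (s(u, v)) →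
      ∃ E_A E_B : Finset (Sym2 Pt), IsPST S E_A ∧ IsPST S E_B ∧
        (∀ e ∈ E_A, IsHullEdge S e) ∧
        (E_B = starAt S u ∨ E_B = starAt S v) ∧
        s(u, v) ∈ E_A ∧ s(u, v) ∈ E_B ∧
        E_A ∩ E_B = {s(u, v)} ∧ NoCross (E_A ∪ E_B) := by
  intro S _ hS u v huv
  obtain ⟨c, hcS, hc, E, hE, hull, hinter⟩ : ∃ c ∈ S, (c = u ∨ c = v) ∧
      ∃ E, IsPST S E ∧ (∀ e ∈ E, IsHullEdge S e) ∧ E ∩ starAt S c = {s(u, v)} := by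
    rcases hS.genPos.isCcwHullEdge_or_swap huv with h | h
    · exact ⟨u, h.left_mem, .inl rfl, h.exists_isPST_inter_starAt hS⟩
    · rw [Sym2.eq_swap]
      exact ⟨v, h.left_mem, .inr rfl, h.exists_isPST_inter_starAt hS⟩
  have star := hS.genPos.isPST_starAt hcS
  obtain ⟨hmemE, hmemStar⟩ := Finset.mem_inter.1 (hinter ▸ Finset.mem_singleton_self s(u, v))
  exact ⟨E, starAt S c, hE, star, hull, hc.imp (congrArg _) (congrArg _), hmemE, hmemStar, hinter,
    star.noCross_union hS.genPos hull⟩
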